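/- Let δ1, δ2 be positive integers with g = gcd(δ1,δ2), set η1 = max{δ1,δ2}, η2 = min{δ1,δ2}, η_{k+2} = η_k mod η_{k+1} while η_{k+1} > 0, and assume η3 > 0. Let x be a positive multiple of g with x < η3 and x ∉ Euc(δ1,δ2), and let j ≥ 3 be the index with η_{j+1} ≤ x ≤ η_j. Then: (a) writing x^(η1,η2) = (x1,x2), there exists d ∈ D(η_{j−1},η_j) ∪ D(η_j,η_{j+1}) with d < x and d^(η1,η2) = (d1,d2) satisfying 0 < d1 < x1 and x2 < d2 < 0; (b) writing x'^(η1,η2) = (x1',x2'), there exists d ∈ D(η_{j−1},η_j) ∪ D(η_j,η_{j+1}) with d < x and d'^(η1,η2) = (d1',d2') satisfying x1' < d1' < 0 and 0 < d2' < x2'. -/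

import Mathlib

/-- The sequence of remainders of the (slow) Euclidean algorithm:
`etaSeq a b 0 = a`, `etaSeq a b 1 = b`, `etaSeq a b (n+2) = etaSeq a b n % etaSeq a b (n+1)`.
(0-indexed: `etaSeq a b (j-1)` is the paper's `η_j` for `a = η₁`, `b = η₂`.) -/
def etaSeq (a b : ℕ) : ℕ → ℕ
  | 0 => a
  | 1 => b
  | n + 2 => etaSeq a b n % etaSeq a b (n + 1)

/-- `Dset u v lo = {u - q*v : lo ≤ q ≤ ⌊u/v⌋}`. -/
def Dset (u v lo : ℕ) : Set ℕ :=
  {x | ∃ q : ℕ, lo ≤ q ∧ q ≤ u / v ∧ x = u - q * v}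

/-- Euclid's set of `δ1` and `δ2`: the union of the sets `D(η_j, η_{j+1})` over all `j`
with `η_{j+1} > 0`, where `q` starts from `0` for the first two levels and from `1`
afterwards. -/
def Euc (δ1 δ2 : ℕ) : Set ℕ :=
  {x | ∃ j : ℕ, 0 < etaSeq (max δ1 δ2) (min δ1 δ2) (j + 1) ∧
      x ∈ Dset (etaSeq (max δ1 δ2) (min δ1 δ2) j)
            (etaSeq (max δ1 δ2) (min δ1 δ2) (j + 1)) (if j ≤ 1 then 0 else 1)}

/-!
Consecutive remainders `H = η_j`, `K = η_{j+1}` with `j ≥ 3` form a unimodular basis of the lattice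
spanned by `η₁, η₂`, and their `(η₁, η₂)`-coordinates lie in opposite open quadrants. If
`x = u * H + v * K` with `0 < x < H`, then either `0 < u` and `v < 0`, or `u ≤ 0` and `0 < v`,
and these two cases correspond to the two quadrants in which `x` has coordinates. In the second
case `K < x` forces `2 ≤ v`, so `K` is a basement. In the first case `u = 1` would put `x` into
`D(H, K)`, hence `2 ≤ u`; then `H / K < -v`, and `H % K = H - (H / K) * K` is a basement.
-/

section Dset

variable {u v lo : ℕ}

lemma Dset_anti_right {lo' : ℕ} (h : lo ≤ lo') : Dset u v lo' ⊆ Dset u v lo :=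
  fun _ ⟨q, hlo, hq, hx⟩ => ⟨q, h.trans hlo, hq, hx⟩

lemma mod_mem_Dset (h : lo ≤ u / v) : u % v ∈ Dset u v lo :=
  ⟨u / v, h, le_rfl, by rw [Nat.mod_eq_sub_div_mul]⟩

lemma mem_Dset_of_add_mul_eq {x q : ℕ} (hv : 0 < v) (hq : lo ≤ q) (h : x + q * v = u) :
    x ∈ Dset u v lo :=
  ⟨q, hq, (Nat.le_div_iff_mul_le hv).2 (by lia), by lia⟩

end Dset

lemma gcd_max_min (m n : ℕ) : Nat.gcd (max m n) (min m n) = Nat.gcd m n := by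
  rcases le_total m n with h | h <;> simp [h, Nat.gcd_comm]

section EtaSeq

variable {a b n : ℕ}

lemma gcd_etaSeq_succ (a b : ℕ) :
    ∀ n, Nat.gcd (etaSeq a b n) (etaSeq a b (n + 1)) = Nat.gcd a b
  | 0 => rfl
  | n + 1 => by
    rw [etaSeq, Nat.gcd_comm, ← Nat.gcd_rec, Nat.gcd_comm, gcd_etaSeq_succ a b n]

lemma etaSeq_succ_le (hab : b ≤ a) (h : 0 < etaSeq a b (n + 2)) :
    etaSeq a b (n + 1) ≤ etaSeq a b n := by
  cases n with
  | zero => exact hab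
  | succ n =>
    have hpos : 0 < etaSeq a b (n + 1) :=
      h.trans_le (Nat.mod_le (etaSeq a b (n + 1)) (etaSeq a b (n + 2)))
    exact (Nat.mod_lt _ hpos).le

lemma etaSeq_succ_pos_of_gcd_dvd {x : ℕ} (hx : 0 < x) (hdvd : Nat.gcd a b ∣ x)
    (hlt : x < etaSeq a b n) : 0 < etaSeq a b (n + 1) := by
  by_contra! hle
  have hgcd : etaSeq a b n = Nat.gcd a b := by
    rw [← gcd_etaSeq_succ a b n, Nat.le_zero.1 hle, Nat.gcd_zero_right]
  exact (Nat.le_of_dvd hx hdvd).not_gt (hgcd ▸ hlt)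

lemma etaSeq_add_two_mem_Dset (hab : b ≤ a) (h₁ : 0 < etaSeq a b (n + 1))
    (h₂ : 0 < etaSeq a b (n + 2)) :
    etaSeq a b (n + 2) ∈ Dset (etaSeq a b n) (etaSeq a b (n + 1)) 1 :=
  mod_mem_Dset (Nat.div_pos (etaSeq_succ_le hab h₂) h₁)

end EtaSeq

section Euc

variable {δ1 δ2 : ℕ}

lemma mem_Euc_of_mem_Dset_one {x n : ℕ} (hpos : 0 < etaSeq (max δ1 δ2) (min δ1 δ2) (n + 1))
    (hx : x ∈ Dset (etaSeq (max δ1 δ2) (min δ1 δ2) n)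
      (etaSeq (max δ1 δ2) (min δ1 δ2) (n + 1)) 1) :
    x ∈ Euc δ1 δ2 :=
  ⟨n, hpos, Dset_anti_right (by split_ifs <;> lia) hx⟩

lemma etaSeq_mem_Euc (hmin : 0 < min δ1 δ2) (h₂ : 0 < etaSeq (max δ1 δ2) (min δ1 δ2) 2) :
    ∀ n, 0 < etaSeq (max δ1 δ2) (min δ1 δ2) n → etaSeq (max δ1 δ2) (min δ1 δ2) n ∈ Euc δ1 δ2
  | 0, _ => ⟨0, hmin, 0, le_rfl, Nat.zero_le _, by simp⟩
  | 1, _ => ⟨1, h₂, 0, le_rfl, Nat.zero_le _, by simp⟩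
  | n + 2, hn => by
    obtain hzero | hpos := Nat.eq_zero_or_pos (etaSeq (max δ1 δ2) (min δ1 δ2) (n + 1))
    -- Past the end of the algorithm `etaSeq` alternates between `0` and the gcd, as `u % 0 = u`.
    · have hrepeat : etaSeq (max δ1 δ2) (min δ1 δ2) (n + 2) =
          etaSeq (max δ1 δ2) (min δ1 δ2) n := by
        rw [etaSeq, hzero, Nat.mod_zero]
      rw [hrepeat] at hn ⊢
      exact etaSeq_mem_Euc hmin h₂ n hn
    · exact mem_Euc_of_mem_Dset_one hpos (etaSeq_add_two_mem_Dset min_le_max hpos hn)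

end Euc

/-- A unimodular change of basis from `(A, B)` to `(H, K)` for which `H` has coordinates in the
open quadrant `(+, -)` and `K` in the open quadrant `(-, +)`. Consecutive remainders of the
Euclidean algorithm carry this structure, with `A` and `B` exchanged at every step. -/
structure OppositeQuadrantBasis (A B H K : ℕ) where
  (s t s' t' : ℤ)
  s_pos : 0 < s
  t_pos : 0 < t
  s'_pos : 0 < s'
  t'_pos : 0 < t'
  left_eq : (H : ℤ) = s * A - t * B
  right_eq : (K : ℤ) = t' * B - s' * A
  det_eq_one : s * t' - t * s' = 1

lemma cast_mod_eq_sub (H K : ℕ) : ((H % K : ℕ) : ℤ) = H - (H / K : ℕ) * K := by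
  rw [Nat.mod_eq_sub_div_mul, Nat.cast_sub (Nat.div_mul_le_self H K), Nat.cast_mul]

lemma opposite_signs_of_eq_mul_add_mul {H K x u v : ℤ} (hK : 0 < K) (hx : 0 < x) (hxH : x < H)
    (h : x = u * H + v * K) : (0 < u ∧ v < 0) ∨ (u ≤ 0 ∧ 0 < v) := by
  obtain hu | hu := lt_or_ge 0 u
  · have hvK : v * K < 0 := by nlinarith
    exact .inl ⟨hu, neg_of_mul_neg_left hvK hK.le⟩
  · have hvK : 0 < v * K := by nlinarith
    exact .inr ⟨hu, pos_of_mul_pos_left hvK hK.le⟩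

namespace OppositeQuadrantBasis

variable {A B H K x : ℕ} {x₁ x₂ : ℤ}

/-- The basis obtained from `(H, K)` by one step of the Euclidean algorithm. -/
def next (P : OppositeQuadrantBasis A B H K) : OppositeQuadrantBasis B A K (H % K) where
  s := P.t'
  t := P.s'
  s' := P.t + (H / K : ℕ) * P.t'
  t' := P.s + (H / K : ℕ) * P.s'
  s_pos := P.t'_pos
  t_pos := P.s'_pos
  s'_pos := add_pos_of_pos_of_nonneg P.t_pos (mul_nonneg (Nat.cast_nonneg _) P.t'_pos.le)
  t'_pos := add_pos_of_pos_of_nonneg P.s_pos (mul_nonneg (Nat.cast_nonneg _) P.s'_pos.le)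
  left_eq := P.right_eq
  right_eq := by rw [cast_mod_eq_sub, P.right_eq, P.left_eq]; ring
  det_eq_one := by linear_combination P.det_eq_one

lemma exists_coords (P : OppositeQuadrantBasis A B H K) (hx : (x : ℤ) = x₁ * A + x₂ * B) :
    ∃ u v : ℤ, (x : ℤ) = u * H + v * K ∧
      x₁ = u * P.s - v * P.s' ∧ x₂ = v * P.t' - u * P.t := by
  refine ⟨P.t' * x₁ + P.s' * x₂, P.t * x₁ + P.s * x₂, ?_, ?_, ?_⟩
  · rw [P.left_eq, P.right_eq, hx]
    linear_combination (-(x₁ * A + x₂ * B)) * P.det_eq_one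
  · linear_combination (-x₁) * P.det_eq_one
  · linear_combination (-x₂) * P.det_eq_one

lemma exists_right_coords_between (P : OppositeQuadrantBasis A B H K) (hK : 0 < K) (hKx : K < x)
    (hxH : x < H) (hx : (x : ℤ) = x₁ * A + x₂ * B) (hx₂ : 0 < x₂) :
    ∃ d₁ d₂ : ℤ, (K : ℤ) = d₁ * A + d₂ * B ∧ x₁ < d₁ ∧ d₁ < 0 ∧ 0 < d₂ ∧ d₂ < x₂ := by
  obtain ⟨u, v, huv, rfl, rfl⟩ := P.exists_coords hx
  zify at hK hKx hxH
  have hsigns := opposite_signs_of_eq_mul_add_mul hK (hK.trans hKx) hxH huv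
  obtain ⟨hu, -⟩ : u ≤ 0 ∧ 0 < v :=
    hsigns.resolve_left fun ⟨hu, hv⟩ => by
      linarith [mul_pos hu P.t_pos, mul_neg_of_neg_of_pos hv P.t'_pos]
  have two_le_v : 2 ≤ v := by
    by_contra! hv
    nlinarith
  exact ⟨-P.s', P.t', by rw [P.right_eq]; ring, by nlinarith [P.s_pos, P.s'_pos],
    neg_neg_of_pos P.s'_pos, P.t'_pos, by nlinarith [P.t_pos, P.t'_pos]⟩

lemma exists_mod_coords_between (P : OppositeQuadrantBasis A B H K) (hK : 0 < K) (hx0 : 0 < x)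
    (hxH : x < H) (hxD : x ∉ Dset H K 1) (hx : (x : ℤ) = x₁ * A + x₂ * B) (hx₁ : 0 < x₁) :
    ∃ d₁ d₂ : ℤ, ((H % K : ℕ) : ℤ) = d₁ * A + d₂ * B ∧
      0 < d₁ ∧ d₁ < x₁ ∧ x₂ < d₂ ∧ d₂ < 0 := by
  obtain ⟨u, v, huv, rfl, rfl⟩ := P.exists_coords hx
  have hsigns := opposite_signs_of_eq_mul_add_mul (Nat.cast_pos.2 hK) (Nat.cast_pos.2 hx0)
    (Nat.cast_lt.2 hxH) huv
  obtain ⟨hu, hv⟩ : 0 < u ∧ v < 0 :=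
    hsigns.resolve_right fun ⟨hu, hv⟩ => by
      linarith [mul_nonpos_of_nonpos_of_nonneg hu P.s_pos.le, mul_pos hv P.s'_pos]
  obtain ⟨w, rfl⟩ : ∃ w : ℕ, v = -w := Int.exists_eq_neg_ofNat hv.le
  have u_ne_one : u ≠ 1 := by
    rintro rfl
    exact hxD (mem_Dset_of_add_mul_eq (q := w) hK (by lia) (by zify; linarith))
  have two_le_u : 2 ≤ u := by lia
  have div_lt_w : ((H / K : ℕ) : ℤ) < w := by
    rw [Nat.cast_lt, Nat.div_lt_iff_lt_mul hK]
    zify at hxH ⊢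
    nlinarith
  refine ⟨P.next.t', -P.next.s', by rw [P.next.right_eq]; ring, P.next.t'_pos, ?_, ?_,
    neg_neg_of_pos P.next.s'_pos⟩
  · simp only [next]
    nlinarith [P.s_pos, P.s'_pos]
  · simp only [next]
    nlinarith [P.t_pos, P.t'_pos]

end OppositeQuadrantBasis

lemma nonempty_basis_etaSeq_two {a b : ℕ} (hb : 0 < b) (hab : b ≤ a) (h₂ : 0 < etaSeq a b 2) :
    Nonempty (OppositeQuadrantBasis a b (etaSeq a b 2) (etaSeq a b 3)) := by
  have hq₁ : (0 : ℤ) < (a / b : ℕ) := by exact_mod_cast Nat.div_pos hab hb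
  have hq₂ : (0 : ℤ) < (b / etaSeq a b 2 : ℕ) := by
    exact_mod_cast Nat.div_pos (Nat.mod_lt a hb).le h₂
  have hη₂ : (etaSeq a b 2 : ℤ) = a - (a / b : ℕ) * b := cast_mod_eq_sub a b
  have hη₃ : (etaSeq a b 3 : ℤ) = b - (b / etaSeq a b 2 : ℕ) * etaSeq a b 2 :=
    cast_mod_eq_sub b (etaSeq a b 2)
  exact ⟨{
    s := 1
    t := (a / b : ℕ)
    s' := (b / etaSeq a b 2 : ℕ)
    t' := 1 + (a / b : ℕ) * (b / etaSeq a b 2 : ℕ)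
    s_pos := one_pos
    t_pos := hq₁
    s'_pos := hq₂
    t'_pos := by positivity
    left_eq := by rw [hη₂, one_mul]
    right_eq := by rw [hη₃]; linear_combination (-((b / etaSeq a b 2 : ℕ) : ℤ)) * hη₂
    det_eq_one := by ring }⟩

lemma nonempty_basis_etaSeq {a b : ℕ} (hb : 0 < b) (hab : b ≤ a) (h₂ : 0 < etaSeq a b 2)
    (n : ℕ) :
    Nonempty (OppositeQuadrantBasis a b (etaSeq a b (n + 2)) (etaSeq a b (n + 3))) ∨
      Nonempty (OppositeQuadrantBasis b a (etaSeq a b (n + 2)) (etaSeq a b (n + 3))) := by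
  induction n with
  | zero => exact .inl (nonempty_basis_etaSeq_two hb hab h₂)
  | succ n ih => exact ih.symm.imp (Nonempty.map .next) (Nonempty.map .next)

lemma exists_basement_of_basis {A B H K x : ℕ} {x₁ x₂ : ℤ}
    (hbasis : Nonempty (OppositeQuadrantBasis A B H K) ∨ Nonempty (OppositeQuadrantBasis B A H K))
    (hK : 0 < K) (hKx : K < x) (hxH : x < H) (hxD : x ∉ Dset H K 1)
    (hx : (x : ℤ) = x₁ * A + x₂ * B) (hx₁ : 0 < x₁) :
    ∃ d ∈ ({K} ∪ Dset H K 1 : Set ℕ), d < x ∧ ∃ d₁ d₂ : ℤ, (d : ℤ) = d₁ * A + d₂ * B ∧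
      0 < d₁ ∧ d₁ < x₁ ∧ x₂ < d₂ ∧ d₂ < 0 := by
  obtain ⟨⟨P⟩⟩ | ⟨⟨P⟩⟩ := hbasis
  · have hmod : H % K ∈ Dset H K 1 := mod_mem_Dset (Nat.div_pos (hKx.trans hxH).le hK)
    exact ⟨H % K, .inr hmod, (Nat.mod_lt H hK).trans hKx,
      P.exists_mod_coords_between hK (hK.trans hKx) hxH hxD hx hx₁⟩
  · rw [add_comm] at hx
    obtain ⟨d₂, d₁, hd, hx₂d₂, hd₂, hd₁, hd₁x₁⟩ :=
      P.exists_right_coords_between hK hKx hxH hx hx₁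
    exact ⟨K, .inl rfl, hKx, d₁, d₂, by rw [hd, add_comm], hd₁, hd₁x₁, hx₂d₂, hd₂⟩

/-- General basement result: for a positive multiple `x` of `g` with `x < η3` and
`x ∉ Euc(δ1,δ2)`, lying between `η_(j+1)` and `η_j` for `j ≥ 3` (here 0-indexed `j ≥ 2`),
there are basements `d ∈ D(η_(j-1),η_j) ∪ D(η_j,η_(j+1))` below `x` whose `(η1,η2)`
representations are coordinatewise strictly smaller (in absolute value) than those of
`x`, both for the unprimed and for the primed representations. -/
theorem exists_basement_general (δ1 δ2 : ℕ) (h1 : 0 < δ1) (h2 : 0 < δ2)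
    (h3pos : 0 < etaSeq (max δ1 δ2) (min δ1 δ2) 2)
    (x : ℕ) (hxpos : 0 < x) (hdvd : Nat.gcd δ1 δ2 ∣ x)
    (hxlt : x < etaSeq (max δ1 δ2) (min δ1 δ2) 2) (hxnot : x ∉ Euc δ1 δ2)
    (j : ℕ) (hj : 2 ≤ j)
    (hxlo : etaSeq (max δ1 δ2) (min δ1 δ2) (j + 1) ≤ x) (hxhi : x ≤ etaSeq (max δ1 δ2) (min δ1 δ2) j) :
    ((∀ x1 x2 : ℤ, ((x : ℤ) = x1 * (max δ1 δ2) + x2 * (min δ1 δ2) ∧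
        0 < x1 ∧ x1 ≤ ((min δ1 δ2 / Nat.gcd δ1 δ2 : ℕ) : ℤ) ∧
        -((max δ1 δ2 / Nat.gcd δ1 δ2 : ℕ) : ℤ) < x2 ∧ x2 ≤ 0) →
      ∃ d : ℕ, (d ∈ Dset (etaSeq (max δ1 δ2) (min δ1 δ2) (j - 1)) (etaSeq (max δ1 δ2) (min δ1 δ2) j) (if j - 1 ≤ 1 then 0 else 1) ∪
          Dset (etaSeq (max δ1 δ2) (min δ1 δ2) j) (etaSeq (max δ1 δ2) (min δ1 δ2) (j + 1)) 1) ∧ d < x ∧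
        ∃ d1 d2 : ℤ, (d : ℤ) = d1 * (max δ1 δ2) + d2 * (min δ1 δ2) ∧
          0 < d1 ∧ d1 < x1 ∧ x2 < d2 ∧ d2 < 0)) ∧
    ((∀ x1' x2' : ℤ, ((x : ℤ) = x1' * (max δ1 δ2) + x2' * (min δ1 δ2) ∧
        -((min δ1 δ2 / Nat.gcd δ1 δ2 : ℕ) : ℤ) < x1' ∧ x1' ≤ 0 ∧
        0 < x2' ∧ x2' ≤ ((max δ1 δ2 / Nat.gcd δ1 δ2 : ℕ) : ℤ)) →
      ∃ d : ℕ, (d ∈ Dset (etaSeq (max δ1 δ2) (min δ1 δ2) (j - 1)) (etaSeq (max δ1 δ2) (min δ1 δ2) j) (if j - 1 ≤ 1 then 0 else 1) ∪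
          Dset (etaSeq (max δ1 δ2) (min δ1 δ2) j) (etaSeq (max δ1 δ2) (min δ1 δ2) (j + 1)) 1) ∧ d < x ∧
        ∃ d1' d2' : ℤ, (d : ℤ) = d1' * (max δ1 δ2) + d2' * (min δ1 δ2) ∧
          x1' < d1' ∧ d1' < 0 ∧ 0 < d2' ∧ d2' < x2')) := by
  have hmin : 0 < min δ1 δ2 := lt_min h1 h2
  have hmem := etaSeq_mem_Euc hmin h3pos
  obtain ⟨n, rfl⟩ := Nat.exists_eq_add_of_le' hj
  have hxH : x < etaSeq (max δ1 δ2) (min δ1 δ2) (n + 2) :=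
    hxhi.lt_of_ne fun h => hxnot (h ▸ hmem (n + 2) (hxpos.trans_le hxhi))
  have hK : 0 < etaSeq (max δ1 δ2) (min δ1 δ2) (n + 3) :=
    etaSeq_succ_pos_of_gcd_dvd hxpos (by rwa [gcd_max_min]) hxH
  have hKx : etaSeq (max δ1 δ2) (min δ1 δ2) (n + 3) < x :=
    hxlo.lt_of_ne fun h => hxnot (h ▸ hmem (n + 3) hK)
  have hxD := mt (mem_Euc_of_mem_Dset_one hK) hxnot
  have hbasis := nonempty_basis_etaSeq hmin min_le_max h3pos n
  have hKD := Set.singleton_subset_iff.2 <| Dset_anti_right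
    (show (if n + 2 - 1 ≤ 1 then 0 else 1) ≤ 1 by split_ifs <;> lia)
    (etaSeq_add_two_mem_Dset min_le_max (hxpos.trans hxH) hK)
  constructor
  · rintro x1 x2 ⟨hx, hx1, -⟩
    obtain ⟨d, hd, h⟩ := exists_basement_of_basis hbasis hK hKx hxH hxD hx hx1
    exact ⟨d, Set.union_subset_union_left _ hKD hd, h⟩
  · rintro x1 x2 ⟨hx, -, -, hx2, -⟩
    obtain ⟨d, hd, hdx, d2, d1, heq, hd2, hdx2, hxd1, hd1⟩ :=
      exists_basement_of_basis hbasis.symm hK hKx hxH hxD (by rw [hx, add_comm]) hx2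
    exact ⟨d, Set.union_subset_union_left _ hKD hd, hdx, d1, d2, by rw [heq, add_comm],
      hxd1, hd1, hd2, hdx2⟩
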